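/- Let R be a prime Noetherian right fully bounded ring, M = R/A a cyclic uniform right R-module with assassinator prime q and Kdim(M) = m. Then every cyclic critical submodule W = R/B of M has annihilator exactly q and is a fully faithful right R/q-module, and Kdim(W) = Kdim(R/q). -/

import Mathlib

open MulOpposite
universe u

/-- Gabriel–Rentschler deviation: `DevLE α P` means the deviation of the
poset `P` is at most `α`. -/
def DevLE : Ordinal.{u} → (P : Type u) → [inst : PartialOrder P] → Prop :=
  fun α P _ =>
    ∀ f : ℕ → P, (∀ n, f (n + 1) ≤ f n) →
      ∃ N : ℕ, ∀ n, N ≤ n →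
        f (n + 1) = f n ∨ ∃ β, ∃ _ : β < α, DevLE β (Set.Icc (f (n + 1)) (f n))
termination_by α => α

/-- Right ideals of `R`, as submodules of `R` viewed as a right module. -/
abbrev RightIdeal (R : Type u) [Ring R] : Type u := Submodule Rᵐᵒᵖ R

/-- Gabriel–Rentschler Krull dimension of a right `R`-module `M`
(least `α` bounding the deviation of the submodule lattice; junk value `0`
if no such ordinal exists). -/
noncomputable def rKdim (R : Type u) [Ring R] (M : Type u) [AddCommGroup M]
    [Module Rᵐᵒᵖ M] : Ordinal.{u} :=
  sInf {α : Ordinal.{u} | DevLE α (Submodule Rᵐᵒᵖ M)}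

/-- `x⁻¹(I) = {a | x * a ∈ I}`, a right ideal. -/
def preIdeal {R : Type u} [Ring R] (x : R) (I : RightIdeal R) : RightIdeal R where
  carrier := {a : R | x * a ∈ I}
  add_mem' := by intro a b ha hb; simpa [mul_add] using add_mem ha hb
  zero_mem' := by simp
  smul_mem' := by
    intro r a ha
    show x * (op (unop r) • a) ∈ I
    rw [op_smul_eq_mul, ← mul_assoc]
    exact I.smul_mem r ha

/-- `S` is a right Ore set. -/
def RightOre {R : Type u} [Ring R] (S : Set R) : Prop :=
  ∀ r : R, ∀ s ∈ S, ∃ r' : R, ∃ s' ∈ S, r * s' = s * r'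

/-- A multiplicatively closed set. -/
def MulClosed {R : Type u} [Ring R] (S : Set R) : Prop :=
  ∀ a ∈ S, ∀ b ∈ S, a * b ∈ S

/-- A Gabriel filter of right ideals. -/
def IsGabrielFilter {R : Type u} [Ring R] (F : Set (RightIdeal R)) : Prop :=
  (∀ I ∈ F, ∀ J : RightIdeal R, I ≤ J → J ∈ F) ∧
  (∀ I ∈ F, ∀ J ∈ F, I ⊓ J ∈ F) ∧
  (∀ I ∈ F, ∀ x : R, preIdeal x I ∈ F)

/-- A right ideal that is two-sided. -/
def TwoSided {R : Type u} [Ring R] (I : RightIdeal R) : Prop :=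
  ∀ r : R, ∀ x ∈ I, r * x ∈ I

/-- A (two-sided) prime ideal of a possibly noncommutative ring. -/
def IsPrimeIdeal {R : Type u} [Ring R] (p : RightIdeal R) : Prop :=
  TwoSided p ∧ p ≠ ⊤ ∧ ∀ a b : R, (∀ r : R, a * r * b ∈ p) → a ∈ p ∨ b ∈ p

/-- `C(p)`: the elements of `R` regular modulo `p`. -/
def CMod {R : Type u} [Ring R] (p : RightIdeal R) : Set R :=
  {c : R | (∀ a : R, c * a ∈ p → a ∈ p) ∧ (∀ a : R, a * c ∈ p → a ∈ p)}

/-- A prime ring. -/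
def IsPrimeRing (R : Type u) [Ring R] : Prop :=
  ∀ a b : R, (∀ r : R, a * r * b = 0) → a = 0 ∨ b = 0

/-- A right module is `V`-torsion. -/
def IsTorsionBy' {R : Type u} [Ring R] (V : Set R) (M : Type u) [AddCommGroup M]
    [Module Rᵐᵒᵖ M] : Prop :=
  ∀ x : M, ∃ v ∈ V, op v • x = 0

/-- The annihilator (as a set) of a right module. -/
def annSet (R : Type u) [Ring R] (M : Type u) [AddCommGroup M] [Module Rᵐᵒᵖ M] :
    Set R :=
  {a : R | ∀ x : M, op a • x = 0}

/-- `R` is right fully bounded: in every prime factor, every essential right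
ideal contains a nonzero two-sided ideal. -/
def RightFullyBounded (R : Type u) [Ring R] : Prop :=
  ∀ p : RightIdeal R, IsPrimeIdeal p →
    ∀ I : RightIdeal R, p ≤ I →
      (∀ J : RightIdeal R, p < J → p < I ⊓ J) →
      ∃ A : RightIdeal R, TwoSided A ∧ p < A ∧ A ≤ I

/-- A uniform right module: any two nonzero submodules intersect nontrivially. -/
def IsUniformMod (R : Type u) [Ring R] (M : Type u) [AddCommGroup M]
    [Module Rᵐᵒᵖ M] : Prop :=
  ∀ N N' : Submodule Rᵐᵒᵖ M, N ≠ ⊥ → N' ≠ ⊥ → N ⊓ N' ≠ ⊥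

/-- The annihilator (as a set of elements of `R`) of a submodule. -/
def annSubSet (R : Type u) [Ring R] {M : Type u} [AddCommGroup M]
    [Module Rᵐᵒᵖ M] (N : Submodule Rᵐᵒᵖ M) : Set R :=
  {a : R | ∀ x ∈ N, op a • x = 0}

/-- `q` is an associated (assassinator) prime of the right module `M`:
`q` is prime and is the annihilator of a nonzero submodule all of whose
nonzero submodules also have annihilator `q`. -/
def IsAssocPrime (R : Type u) [Ring R] (q : RightIdeal R) (M : Type u)
    [AddCommGroup M] [Module Rᵐᵒᵖ M] : Prop :=
  IsPrimeIdeal q ∧ ∃ N : Submodule Rᵐᵒᵖ M, N ≠ ⊥ ∧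
    ∀ N' : Submodule Rᵐᵒᵖ M, N' ≤ N → N' ≠ ⊥ → annSubSet R N' = (q : Set R)

/-- A critical right module: nonzero, and every proper quotient has strictly
smaller Krull dimension. -/
def IsCriticalMod (R : Type u) [Ring R] (M : Type u) [AddCommGroup M]
    [Module Rᵐᵒᵖ M] : Prop :=
  Nontrivial M ∧
    ∀ N : Submodule Rᵐᵒᵖ M, N ≠ ⊥ → rKdim R (M ⧸ N) < rKdim R M

/-- `M` is a fully faithful right `R/q`-module: `q` annihilates `M` and every
nonzero submodule of `M` has annihilator exactly `q`. -/
def FullyFaithfulOver (R : Type u) [Ring R] (q : RightIdeal R) (M : Type u)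
    [AddCommGroup M] [Module Rᵐᵒᵖ M] : Prop :=
  (q : Set R) ⊆ annSet R M ∧
    ∀ N : Submodule Rᵐᵒᵖ M, N ≠ ⊥ → annSubSet R N = (q : Set R)


theorem devLE_iff (α : Ordinal.{u}) (P : Type u) [PartialOrder P] : DevLE α P ↔
    ∀ f : ℕ → P, (∀ n, f (n + 1) ≤ f n) →
      ∃ N : ℕ, ∀ n, N ≤ n →
        f (n + 1) = f n ∨ ∃ β, β < α ∧ DevLE β (Set.Icc (f (n + 1)) (f n)) := by
  rw [DevLE]
  simp only [exists_prop]

theorem devLE_mono {α β : Ordinal.{u}} (h : α ≤ β) {P : Type u} [PartialOrder P]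
    (hP : DevLE α P) : DevLE β P := by
  rw [devLE_iff] at *
  intro f hf
  obtain ⟨N, hN⟩ := hP f hf
  refine ⟨N, fun n hn => (hN n hn).imp id ?_⟩
  rintro ⟨γ, hγ, h'⟩
  exact ⟨γ, hγ.trans_le h, h'⟩

theorem devLE_strictMono (α : Ordinal.{u}) : ∀ {P Q : Type u} [PartialOrder P] [PartialOrder Q]
    (g : Q → P), StrictMono g → DevLE α P → DevLE α Q := by
  induction α using WellFoundedLT.induction with
  | ind α ih =>
    intro P Q _ _ g hg hP
    rw [devLE_iff] at *
    intro f hf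
    obtain ⟨N, hN⟩ := hP (g ∘ f) (fun n => hg.monotone (hf n))
    refine ⟨N, fun n hn => ?_⟩
    rcases hN n hn with h | ⟨β, hβ, h⟩
    · left
      by_contra hne
      exact absurd h (hg (lt_of_le_of_ne (hf n) hne)).ne
    · right
      refine ⟨β, hβ, ?_⟩
      refine ih β hβ (fun x : Set.Icc (f (n+1)) (f n) =>
        (⟨g x.1, hg.monotone x.2.1, hg.monotone x.2.2⟩ :
          Set.Icc ((g ∘ f) (n+1)) ((g ∘ f) n))) ?_ h
      intro x y hxy
      exact hg hxy

theorem devLE_subsingleton (α : Ordinal.{u}) (P : Type u) [PartialOrder P] [Subsingleton P] :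
    DevLE α P := by
  rw [devLE_iff]
  intro f hf
  exact ⟨0, fun n _ => Or.inl (Subsingleton.elim _ _)⟩

theorem devLE_prod (α : Ordinal.{u}) : ∀ {P Q : Type u} [PartialOrder P] [PartialOrder Q],
    DevLE α P → DevLE α Q → DevLE α (P × Q) := by
  induction α using WellFoundedLT.induction with
  | ind α ih =>
    intro P Q _ _ hP hQ
    rw [devLE_iff] at *
    intro f hf
    obtain ⟨N, hN⟩ := hP (fun n => (f n).1) (fun n => (hf n).1)
    obtain ⟨N', hN'⟩ := hQ (fun n => (f n).2) (fun n => (hf n).2)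
    refine ⟨max N N', fun n hn => ?_⟩
    have key : ∀ β, β < α → DevLE β (Set.Icc (f (n+1)).1 (f n).1) →
        DevLE β (Set.Icc (f (n+1)).2 (f n).2) → DevLE β (Set.Icc (f (n+1)) (f n)) := by
      intro β hβ h1 h2
      refine devLE_strictMono β (fun x : Set.Icc (f (n+1)) (f n) =>
        ((⟨x.1.1, x.2.1.1, x.2.2.1⟩ : Set.Icc (f (n+1)).1 (f n).1),
         (⟨x.1.2, x.2.1.2, x.2.2.2⟩ : Set.Icc (f (n+1)).2 (f n).2))) ?_ (ih β hβ h1 h2)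
      apply Monotone.strictMono_of_injective
      · intro x y hxy
        exact ⟨hxy.1, hxy.2⟩
      · intro x y hxy
        simp only [Prod.mk.injEq] at hxy
        exact Subtype.ext (Prod.ext (congrArg Subtype.val hxy.1) (congrArg Subtype.val hxy.2))
    rcases hN n (le_trans (le_max_left _ _) hn) with h | ⟨β, hβ, h⟩ <;>
    rcases hN' n (le_trans (le_max_right _ _) hn) with h' | ⟨β', hβ', h'⟩
    · exact Or.inl (Prod.ext h h')
    · refine Or.inr ⟨β', hβ', key β' hβ' ?_ h'⟩
      rw [h, Set.Icc_self]
      exact devLE_subsingleton _ _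
    · refine Or.inr ⟨β, hβ, key β hβ h ?_⟩
      rw [h', Set.Icc_self]
      exact devLE_subsingleton _ _
    · exact Or.inr ⟨max β β', max_lt hβ hβ', key _ (max_lt hβ hβ')
        (devLE_mono (le_max_left _ _) h) (devLE_mono (le_max_right _ _) h')⟩

theorem exists_devLE (P : Type u) [PartialOrder P] [OrderBot P] [WellFoundedGT P] :
    ∃ α : Ordinal.{u}, DevLE α P := by
  have key : ∀ a : P, ∃ α : Ordinal.{u}, DevLE α (Set.Ici a) := by
    intro a
    induction a using WellFoundedGT.induction with
    | ind a ih =>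
      choose! F hF using ih
      refine ⟨⨆ b : P, Order.succ (F b), ?_⟩
      rw [devLE_iff]
      intro f hf
      have hanti : Antitone f := antitone_nat_of_succ_le hf
      by_cases hex : ∃ n, (f n).1 = a
      · obtain ⟨N, hN⟩ := hex
        have : ∀ n, N ≤ n → (f n).1 = a := fun n hn =>
          le_antisymm (le_trans (show (f n).1 ≤ (f N).1 from hanti hn) hN.le) (f n).2
        exact ⟨N, fun n hn => Or.inl (Subtype.ext ((this _ (by omega)).trans (this n hn).symm))⟩
      · push Not at hex
        refine ⟨0, fun n _ => Or.inr ⟨F (f (n+1)).1, ?_, ?_⟩⟩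
        · exact lt_of_lt_of_le (Order.lt_succ _)
            (le_ciSup (f := fun b : P => Order.succ (F b)) (Ordinal.bddAbove_of_small) _)
        · have h1 := hF (f (n+1)).1 (lt_of_le_of_ne (f (n+1)).2 (hex _).symm)
          refine devLE_strictMono _ (fun x : Set.Icc (f (n+1)) (f n) =>
            (⟨x.1.1, x.2.1⟩ : Set.Ici (f (n+1)).1)) ?_ h1
          intro x y hxy
          exact hxy
  obtain ⟨α, h⟩ := key ⊥
  exact ⟨α, devLE_strictMono α (fun x : P => (⟨x, bot_le⟩ : Set.Ici (⊥:P))) (fun x y h => h) h⟩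

section Intervals
variable {T : Type u} [Ring T] {X : Type u} [AddCommGroup X] [Module T X]
  {Y : Type u} [AddCommGroup Y] [Module T Y]

/-- Deviation of an interval of submodules is at most `β`. -/
def KI (β : Ordinal.{u}) (a b : Submodule T X) : Prop := DevLE β (Set.Icc a b)

/-- Deviation of an interval of submodules is less than `β` (or the interval is trivial). -/
def KL (β : Ordinal.{u}) (a b : Submodule T X) : Prop := b ≤ a ∨ ∃ γ, γ < β ∧ KI γ a b

theorem KI.le {β γ : Ordinal.{u}} {a b : Submodule T X} (h : KI β a b) (hl : β ≤ γ) : KI γ a b :=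
  devLE_mono hl h

theorem KI.triv {β : Ordinal.{u}} {a b : Submodule T X} (h : b ≤ a) : KI β a b := by
  have : Subsingleton (Set.Icc a b) :=
    ⟨fun x y => Subtype.ext (le_antisymm (x.2.2.trans (h.trans y.2.1))
      (y.2.2.trans (h.trans x.2.1)))⟩
  exact devLE_subsingleton _ _

theorem KL.toKI {β : Ordinal.{u}} {a b : Submodule T X} (h : KL β a b) : KI β a b := by
  rcases h with h | ⟨γ, hγ, h⟩
  · exact KI.triv h
  · exact h.le hγ.le

theorem KI.map {β : Ordinal.{u}} {a b : Submodule T Y} (h : KI β a b) (f : X →ₗ[T] Y)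
    (hab : a ≤ b) {a' b' : Submodule T X} (h1 : ∀ x ∈ b', f x ∈ b)
    (h2 : ∀ x ∈ b', f x ∈ a → x ∈ a') : KI β a' b' := by
  refine devLE_strictMono β (fun x : Set.Icc a' b' =>
    (⟨x.1.map f ⊔ a, le_sup_right, sup_le (Submodule.map_le_iff_le_comap.2
      (fun y hy => h1 y (x.2.2 hy))) hab⟩ : Set.Icc a b)) ?_ h
  intro x y hxy
  refine lt_of_le_not_ge (sup_le_sup_right (Submodule.map_mono hxy.le) a) ?_
  intro hle
  apply hxy.not_ge
  intro z hz
  have hz1 : f z ∈ x.1.map f ⊔ a := hle (Submodule.mem_sup_left (Submodule.mem_map_of_mem hz))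
  obtain ⟨_, ⟨w, hw, rfl⟩, v, hv, hs⟩ := Submodule.mem_sup.1 hz1
  have : z - w ∈ a' := by
    apply h2
    · exact sub_mem (y.2.2 hz) (x.2.2 hw)
    · rw [map_sub, ← hs]; simpa using hv
  have := add_mem (x.2.1 this) hw
  simpa using this

theorem KI.surj {β : Ordinal.{u}} {a b : Submodule T X} (h : KI β a b) (f : X →ₗ[T] Y)
    (hab : a ≤ b) {a' b' : Submodule T Y} (h1 : ∀ x ∈ a, f x ∈ a')
    (h2 : ∀ y ∈ b', ∃ x ∈ b, ∃ z ∈ a', y = f x + z) : KI β a' b' := by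
  refine devLE_strictMono β (fun y : Set.Icc a' b' =>
    (⟨y.1.comap f ⊓ b, le_inf (fun x hx => y.2.1 (h1 x hx)) hab, inf_le_right⟩ :
      Set.Icc a b)) ?_ h
  intro x y hxy
  refine lt_of_le_not_ge (inf_le_inf_right b (Submodule.comap_mono hxy.le)) ?_
  intro hle
  apply hxy.not_ge
  intro v hv
  obtain ⟨w, hw, z, hz, rfl⟩ := h2 v (y.2.2 hv)
  have hw2 : w ∈ y.1.comap f ⊓ b := by
    refine ⟨?_, hw⟩
    have := sub_mem hv (y.2.1 hz)
    simpa using this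
  exact add_mem (hle hw2).1 (x.2.1 hz)

theorem KI.sub {β : Ordinal.{u}} {a b a' b' : Submodule T X} (h : KI β a b)
    (hab : a ≤ b) (h1 : a ≤ a') (h2 : b' ≤ b) : KI β a' b' :=
  h.map LinearMap.id hab (fun _ hx => h2 hx) (fun _ _ hx => h1 hx)

theorem KI.ext {β : Ordinal.{u}} {a b c : Submodule T X} (h : KI β a b) (h' : KI β b c)
    (hab : a ≤ b) (hbc : b ≤ c) : KI β a c := by
  refine devLE_strictMono β (fun x : Set.Icc a c =>
    ((⟨x.1 ⊓ b, le_inf x.2.1 hab, inf_le_right⟩ : Set.Icc a b),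
      (⟨x.1 ⊔ b, le_sup_right, sup_le x.2.2 hbc⟩ : Set.Icc b c))) ?_ (devLE_prod β h h')
  intro x y hxy
  refine lt_of_le_not_ge ⟨inf_le_inf_right b (show x.1 ≤ y.1 from hxy.le),
    sup_le_sup_right (show x.1 ≤ y.1 from hxy.le) b⟩ ?_
  rintro ⟨h1, h2⟩
  exact hxy.ne (Subtype.ext (eq_of_le_of_inf_le_of_sup_le (z := b) hxy.le h1 h2))

theorem KL.map {β : Ordinal.{u}} {a b : Submodule T Y} (h : KL β a b) (f : X →ₗ[T] Y)
    (hab : a ≤ b) {a' b' : Submodule T X} (h1 : ∀ x ∈ b', f x ∈ b)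
    (h2 : ∀ x ∈ b', f x ∈ a → x ∈ a') : KL β a' b' := by
  rcases h with h | ⟨γ, hγ, h⟩
  · exact Or.inl fun x hx => h2 x hx (h (h1 x hx))
  · exact Or.inr ⟨γ, hγ, h.map f hab h1 h2⟩

theorem KL.surj {β : Ordinal.{u}} {a b : Submodule T X} (h : KL β a b) (f : X →ₗ[T] Y)
    (hab : a ≤ b) {a' b' : Submodule T Y} (h1 : ∀ x ∈ a, f x ∈ a')
    (h2 : ∀ y ∈ b', ∃ x ∈ b, ∃ z ∈ a', y = f x + z) : KL β a' b' := by
  rcases h with h | ⟨γ, hγ, h⟩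
  · left
    intro y hy
    obtain ⟨x, hx, z, hz, rfl⟩ := h2 y hy
    exact add_mem (h1 x (h hx)) hz
  · exact Or.inr ⟨γ, hγ, h.surj f hab h1 h2⟩

theorem KL.sub {β : Ordinal.{u}} {a b a' b' : Submodule T X} (h : KL β a b)
    (hab : a ≤ b) (h1 : a ≤ a') (h2 : b' ≤ b) : KL β a' b' :=
  h.map LinearMap.id hab (fun _ hx => h2 hx) (fun _ _ hx => h1 hx)

theorem KL.ext {β : Ordinal.{u}} {a b c : Submodule T X} (h : KL β a b) (h' : KL β b c)
    (hab : a ≤ b) (hbc : b ≤ c) : KL β a c := by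
  rcases h with h | ⟨γ, hγ, h⟩
  · rwa [le_antisymm hab h]
  · rcases h' with h' | ⟨γ', hγ', h'⟩
    · rw [← le_antisymm hbc h']; exact Or.inr ⟨γ, hγ, h⟩
    · exact Or.inr ⟨max γ γ', max_lt hγ hγ',
        (h.le (le_max_left _ _)).ext (h'.le (le_max_right _ _)) hab hbc⟩

theorem KI_iff_chain {β : Ordinal.{u}} {a b : Submodule T X} : KI β a b ↔
    ∀ f : ℕ → Submodule T X, (∀ n, f (n+1) ≤ f n) → (∀ n, a ≤ f n) → (∀ n, f n ≤ b) →
      ∃ N, ∀ n, N ≤ n → KL β (f (n+1)) (f n) := by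
  unfold KI
  rw [devLE_iff]
  constructor
  · intro h f hf ha hb
    obtain ⟨N, hN⟩ := h (fun n => ⟨f n, ha n, hb n⟩) hf
    refine ⟨N, fun n hn => ?_⟩
    rcases hN n hn with h | ⟨γ, hγ, h⟩
    · left
      exact (congrArg Subtype.val h).ge
    · right
      refine ⟨γ, hγ, ?_⟩
      refine devLE_strictMono γ (fun x : Set.Icc (f (n+1)) (f n) =>
        (⟨⟨x.1, (ha _).trans x.2.1, x.2.2.trans (hb _)⟩, x.2.1, x.2.2⟩ :
          Set.Icc (⟨f (n+1), ha _, hb _⟩ : Set.Icc a b) ⟨f n, ha _, hb _⟩)) ?_ h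
      intro x y hxy
      exact hxy
  · intro h f hf
    obtain ⟨N, hN⟩ := h (fun n => (f n).1) hf (fun n => (f n).2.1) (fun n => (f n).2.2)
    refine ⟨N, fun n hn => ?_⟩
    rcases hN n hn with h | ⟨γ, hγ, h⟩
    · left
      exact Subtype.ext (le_antisymm (hf n) h)
    · right
      refine ⟨γ, hγ, ?_⟩
      refine devLE_strictMono γ (fun x : Set.Icc (f (n+1)) (f n) =>
        (⟨x.1.1, x.2.1, x.2.2⟩ : Set.Icc (f (n+1)).1 (f n).1)) ?_ h
      intro x y hxy
      exact hxy

/-- finite intersections -/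
theorem KI.finset_inf {β : Ordinal.{u}} {ι : Type*} (t : Finset ι) (N : ι → Submodule T X)
    (h : ∀ i ∈ t, KI β (N i) ⊤) : KI β (t.inf N) ⊤ := by
  classical
  induction t using Finset.induction_on with
  | empty => exact KI.triv (by simp)
  | insert i t _ ih =>
    rw [Finset.inf_insert]
    have h1 := h i (by simp)
    have h2 := ih (fun j hj => h j (by simp [hj]))
    exact KI.ext (h2.map LinearMap.id le_top (b' := N i) (fun _ _ => trivial)
      (fun x hx hx' => ⟨hx, hx'⟩)) h1 inf_le_left le_top

theorem KL.finset_inf {β : Ordinal.{u}} {ι : Type*} (t : Finset ι) (N : ι → Submodule T X)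
    (h : ∀ i ∈ t, KL β (N i) ⊤) : KL β (t.inf N) ⊤ := by
  classical
  induction t using Finset.induction_on with
  | empty => exact Or.inl (by simp)
  | insert i t _ ih =>
    rw [Finset.inf_insert]
    have h1 := h i (by simp)
    have h2 := ih (fun j hj => h j (by simp [hj]))
    exact KL.ext (h2.map LinearMap.id le_top (b' := N i) (fun _ _ => trivial)
      (fun x hx hx' => ⟨hx, hx'⟩)) h1 inf_le_left le_top

/-- existence of relatively critical submodules -/
theorem exists_crit {β : Ordinal.{u}} {a b : Submodule T X} (hab : a < b) (h : KI β a b) :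
    ∃ u, a < u ∧ u ≤ b ∧ ∀ v, a < v → v ≤ u → KL β v u := by
  by_contra hcon
  push Not at hcon
  choose! g hg1 hg2 hg3 using hcon
  let F : ℕ → {u : Submodule T X // a < u ∧ u ≤ b} := fun n =>
    Nat.rec ⟨b, hab, le_rfl⟩ (fun _ u => ⟨g u.1, hg1 u.1 u.2.1 u.2.2,
      (hg2 u.1 u.2.1 u.2.2).trans u.2.2⟩) n
  obtain ⟨N, hN⟩ := KI_iff_chain.1 h (fun n => (F n).1)
    (fun n => hg2 (F n).1 (F n).2.1 (F n).2.2) (fun n => (F n).2.1.le) (fun n => (F n).2.2)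
  exact hg3 (F N).1 (F N).2.1 (F N).2.2 (hN N le_rfl)

/-- bound on the deviation by quotients by essential submodules -/
theorem KI_of_essential [IsNoetherian T X] {β : Ordinal.{u}} {a b : Submodule T X}
    (h : ∀ e, a ≤ e → e ≤ b → (∀ z, a ≤ z → z ≤ b → z ⊓ e ≤ a → z ≤ a) → KL β e b) :
    KI β a b := by
  rw [KI_iff_chain]
  intro f hf ha hb
  have hanti : Antitone f := antitone_nat_of_succ_le hf
  obtain ⟨Y, hY⟩ := (set_has_maximal_iff_noetherian (R := T) (M := X)).2 inferInstance
    {Y | a ≤ Y ∧ Y ≤ b ∧ ∃ n, Y ⊓ f n ≤ a} ⟨a, le_rfl, (ha 0).trans (hb 0), 0, inf_le_left⟩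
  obtain ⟨⟨haY, hYb, N, hN⟩, hmax⟩ := hY
  refine ⟨N, fun m hm => ?_⟩
  have hYm : Y ⊓ f m ≤ a := (inf_le_inf_left _ (hanti hm)).trans hN
  have hE : KL β (Y ⊔ f (m+1)) b := by
    apply h _ (haY.trans le_sup_left) (sup_le hYb (hb _))
    intro z haz hzb hz
    have hmem : (Y ⊔ z) ⊓ f (m+1) ≤ a := by
      rintro x ⟨hx, hxf⟩
      obtain ⟨y, hy, w, hw, rfl⟩ := Submodule.mem_sup.1 hx
      have hw' : w ∈ Y ⊔ f (m+1) := by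
        have := sub_mem ((le_sup_right : f (m+1) ≤ Y ⊔ f (m+1)) hxf)
          ((le_sup_left : Y ≤ Y ⊔ f (m+1)) hy)
        simpa using this
      have hwa : w ∈ a := hz ⟨hw, hw'⟩
      have hyf : y ∈ f (m+1) := by
        have := sub_mem hxf (ha (m+1) hwa)
        simpa using this
      exact add_mem (hYm ⟨hy, hf m hyf⟩) hwa
    have hle : Y ⊔ z ≤ Y := by
      by_contra hn
      exact hmax (Y ⊔ z) ⟨haY.trans le_sup_left, sup_le hYb hzb, m+1, hmem⟩
        (lt_of_le_not_ge le_sup_left hn)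
    exact fun x hx => hz ⟨hx, Submodule.mem_sup_left (hle (Submodule.mem_sup_right hx))⟩
  refine hE.map LinearMap.id (sup_le hYb (hb _)) (fun x hx => hb m hx) ?_
  intro x hx hx'
  obtain ⟨y, hy, w, hw, hyw⟩ := Submodule.mem_sup.1 hx'
  simp only [LinearMap.id_apply] at hyw
  subst hyw
  have hyf : y ∈ f m := by
    have := sub_mem hx (hf m hw)
    simpa using this
  exact add_mem (ha _ (hYm ⟨hy, hyf⟩)) hw

end Intervals

section RingPart
variable {R : Type u} [Ring R] {X : Type u} [AddCommGroup X] [Module Rᵐᵒᵖ X]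

/-- `r ↦ x r` as a map of right modules. -/
def lm (x : X) : R →ₗ[Rᵐᵒᵖ] X where
  toFun r := op r • x
  map_add' a b := by rw [op_add, add_smul]
  map_smul' s a := by
    show op (a * unop s) • x = s • op a • x
    rw [op_mul, op_unop, mul_smul]

theorem lm_apply (x : X) (r : R) : lm x r = op r • x := rfl

theorem mulr {I : RightIdeal R} {x : R} (h : x ∈ I) (r : R) : x * r ∈ I := I.smul_mem (op r) h

theorem opr {a : Submodule Rᵐᵒᵖ X} {x : X} (h : x ∈ a) (r : R) : op r • x ∈ a := a.smul_mem (op r) h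

theorem op_mul_smul' (r s : R) (x : X) : op (r * s) • x = op s • op r • x := by
  rw [op_mul, mul_smul]

/-- the annihilator of `n` modulo `a` -/
def annq (a n : Submodule Rᵐᵒᵖ X) : RightIdeal R where
  carrier := {r | ∀ w ∈ n, op r • w ∈ a}
  add_mem' := by
    intro r s hr hs w hw
    rw [op_add, add_smul]
    exact add_mem (hr w hw) (hs w hw)
  zero_mem' := by intro w _; simp
  smul_mem' := by
    intro s r hr w hw
    show op (r * unop s) • w ∈ a
    rw [op_mul_smul']
    exact opr (hr w hw) _

theorem mem_annq {a n : Submodule Rᵐᵒᵖ X} {r : R} : r ∈ annq a n ↔ ∀ w ∈ n, op r • w ∈ a := Iff.rfl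

theorem mem_annq' {a n : RightIdeal R} {r : R} : r ∈ annq a n ↔ ∀ w ∈ n, w * r ∈ a := Iff.rfl

theorem twoSided_annq (a n : Submodule Rᵐᵒᵖ X) : TwoSided (annq a n) := by
  intro s r hr w hw
  rw [op_mul_smul']
  exact hr _ (opr hw s)

theorem mem_preIdeal {x r : R} {I : RightIdeal R} : r ∈ preIdeal x I ↔ x * r ∈ I := Iff.rfl

/-- Lemma 1, generators. -/
theorem exists_gens [IsNoetherianRing R] {C D : RightIdeal R} (hC : TwoSided C) :
    ∃ t : Finset R, (∀ d ∈ t, d ∈ D) ∧ ∀ x, (∀ d ∈ t, d * x ∈ C) → x ∈ annq C D := by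
  obtain ⟨t, ht, hspan⟩ := Submodule.fg_span_iff_fg_span_finset_subset (R := R) (D : Set R) |>.1
    (IsNoetherian.noetherian _)
  refine ⟨t, fun d hd => ht hd, fun x hx d hd => ?_⟩
  have : d ∈ Submodule.span R (t : Set R) := by
    rw [← hspan]; exact Submodule.subset_span hd
  show d * x ∈ C
  clear hd
  induction this using Submodule.span_induction with
  | mem y hy => exact hx y hy
  | zero => simp
  | add y z _ _ h1 h2 => rw [add_mul]; exact add_mem h1 h2
  | smul r y _ h1 => rw [smul_eq_mul, mul_assoc]; exact hC r _ h1

theorem KI.annq_top [IsNoetherianRing R] {β : Ordinal.{u}} {C D : RightIdeal R}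
    (hC : TwoSided C) (hCD : C ≤ D) (h : KI β C D) : KI β (annq C D) ⊤ := by
  obtain ⟨t, ht, hx⟩ := exists_gens (D := D) hC
  have := KI.finset_inf (β := β) t (fun d => preIdeal d C) (fun d hd =>
    h.map (lm d) hCD (fun x _ => mulr (ht d hd) x) (fun x _ hx => hx))
  refine this.sub le_top ?_ le_rfl
  intro x hxt
  apply hx
  intro d hd
  exact (Finset.inf_le (f := fun d => preIdeal d C) hd : _ ≤ preIdeal d C) hxt

/-- Lemma 2 -/
theorem KI.of_ann [IsNoetherian Rᵐᵒᵖ X] {β : Ordinal.{u}} {a b : Submodule Rᵐᵒᵖ X}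
    {Q : RightIdeal R} (hQ : KI β Q ⊤) (hab : a ≤ b) (h : ∀ w ∈ b, ∀ r ∈ Q, op r • w ∈ a) :
    KI β a b := by
  classical
  obtain ⟨t, ht⟩ := (IsNoetherian.noetherian b : b.FG)
  have key : ∀ s : Finset X, s ⊆ t → KI β a (a ⊔ Submodule.span Rᵐᵒᵖ (s : Set X)) := by
    intro s
    induction s using Finset.induction_on with
    | empty => intro _; exact KI.triv (by simp)
    | insert x s _ ih =>
      intro hs
      have h1 := ih (fun y hy => hs (Finset.mem_insert_of_mem hy))
      refine h1.ext (b := a ⊔ Submodule.span Rᵐᵒᵖ (s : Set X)) ?_ le_sup_left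
        (sup_le_sup_left (Submodule.span_mono (by simp)) _)
      have hxb : x ∈ b := ht ▸ Submodule.subset_span (hs (Finset.mem_insert_self x s))
      refine hQ.surj (lm x) le_top (fun r hr => Submodule.mem_sup_left (h x hxb r hr)) ?_
      intro y hy
      rw [Finset.coe_insert, Submodule.span_insert, sup_left_comm] at hy
      obtain ⟨y1, hy1, z, hz, rfl⟩ := Submodule.mem_sup.1 hy
      obtain ⟨r, rfl⟩ := Submodule.mem_span_singleton.1 hy1
      exact ⟨unop r, trivial, z, hz, rfl⟩
  have := key t le_rfl
  rw [ht] at this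
  rwa [sup_eq_right.2 hab] at this

theorem KL.of_ann [IsNoetherian Rᵐᵒᵖ X] {β : Ordinal.{u}} {a b : Submodule Rᵐᵒᵖ X}
    {Q : RightIdeal R} (hQ : KL β Q ⊤) (hab : a ≤ b) (h : ∀ w ∈ b, ∀ r ∈ Q, op r • w ∈ a) :
    KL β a b := by
  rcases hQ with hQ | ⟨γ, hγ, hQ⟩
  · left
    intro w hw
    simpa using h w hw 1 (hQ trivial)
  · exact Or.inr ⟨γ, hγ, hQ.of_ann hab h⟩

/-- Lemma 3 -/
theorem KI.mul [IsNoetherian Rᵐᵒᵖ R] {β : Ordinal.{u}} {I I1 I2 : RightIdeal R}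
    (h1 : KI β I1 ⊤) (h2 : KI β I2 ⊤) (h : ∀ x ∈ I1, ∀ y ∈ I2, x * y ∈ I) : KI β I ⊤ := by
  have h3 : KI β I (I ⊔ I1) := by
    refine h2.of_ann le_sup_left ?_
    intro w hw r hr
    obtain ⟨x, hx, y, hy, rfl⟩ := Submodule.mem_sup.1 hw
    show (x + y) * r ∈ I
    rw [add_mul]
    exact add_mem (mulr hx r) (h y hy r hr)
  exact h3.ext (h1.sub le_top le_sup_right le_rfl) le_sup_left le_top

theorem IsPrimeIdeal.annq_eq {p J : RightIdeal R} (hp : IsPrimeIdeal p) (hJ : ¬ J ≤ p) :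
    annq p J ≤ p := by
  intro x hx
  obtain ⟨j, hj, hjp⟩ := SetLike.not_le_iff_exists.1 hJ
  exact (hp.2.2 j x (fun r => hx (j * r) (mulr hj r))).resolve_left hjp

/-- two-sided ideals strictly above a prime are essential above it -/
theorem IsPrimeIdeal.essential {p E : RightIdeal R} (hp : IsPrimeIdeal p) (hE : TwoSided E)
    (hpE : p < E) : ∀ J : RightIdeal R, p < J → p < E ⊓ J := by
  intro J hJ
  refine lt_of_le_not_ge (le_inf hpE.le hJ.le) fun hle => ?_
  obtain ⟨j, hj, hjp⟩ := SetLike.not_le_iff_exists.1 hJ.not_ge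
  obtain ⟨e, he, hep⟩ := SetLike.not_le_iff_exists.1 hpE.not_ge
  refine (hp.2.2 j e (fun r => hle ⟨hE _ _ he, ?_⟩)).elim hjp hep
  rw [mul_assoc]; exact mulr hj _

/-- Lemma 5 -/
theorem KL.of_essential [IsNoetherianRing R] {β : Ordinal.{u}}
    {p E : RightIdeal R} (hp : IsPrimeIdeal p) (h : KI β p ⊤) (hpE : p ≤ E)
    (hE : ∀ J : RightIdeal R, p < J → p < E ⊓ J) : KL β E ⊤ := by
  classical
  obtain ⟨U, hpU, -, hU⟩ := exists_crit (lt_top_iff_ne_top.2 hp.2.1) h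
  have hex : ∃ n, ∃ t : Finset R, t.card = n ∧ (∀ d ∈ t, d ∈ U) ∧
      ∀ x, (∀ d ∈ t, d * x ∈ p) → x ∈ p := by
    obtain ⟨t, ht, hx⟩ := exists_gens (D := U) hp.1
    exact ⟨_, t, rfl, ht, fun x h => hp.annq_eq hpU.not_ge (hx x h)⟩
  obtain ⟨t, htc, htU, htp⟩ := Nat.find_spec hex
  have hmin := fun m => @Nat.find_min _ _ hex m
  rw [← htc] at hmin
  let K : R → RightIdeal R := fun u => (t.erase u).inf (fun d => preIdeal d p)
  have memK : ∀ u x, x ∈ K u ↔ ∀ d ∈ t, d ≠ u → d * x ∈ p := by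
    intro u x
    simp only [K, Submodule.mem_finsetInf, Finset.mem_erase, mem_preIdeal]
    exact ⟨fun h d hd hne => h d ⟨hne, hd⟩, fun h d hd => h d hd.2 hd.1⟩
  have hK : ∀ u ∈ t, p < K u := by
    intro u hu
    refine lt_of_le_not_ge (fun x hx => (memK u x).2 fun d _ _ => hp.1 d x hx) fun hle => ?_
    refine hmin (t.erase u).card (Finset.card_erase_lt_of_mem hu) ⟨t.erase u, rfl,
      fun d hd => htU d (Finset.mem_of_mem_erase hd), fun x hx => hle ?_⟩
    exact (memK u x).2 fun d hd hne => hx d (Finset.mem_erase.2 ⟨hne, hd⟩)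
  let N : R → RightIdeal R := fun u => (E ⊓ K u) ⊔ preIdeal u p
  have hN : ∀ u ∈ t, KL β (N u) ⊤ := by
    intro u hu
    have hv := hE _ (hK u hu)
    obtain ⟨v, hvV, hvp⟩ := SetLike.not_le_iff_exists.1 hv.not_ge
    have huv : u * v ∉ p := by
      intro hc
      apply hvp
      apply htp
      intro d hd
      by_cases hdu : d = u
      · rwa [hdu]
      · exact (memK u v).1 hvV.2 d hd hdu
    have hle : (E ⊓ K u).map (lm u) ⊔ p ≤ U := by
      refine sup_le ?_ hpU.le
      rintro _ ⟨x, _, rfl⟩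
      exact mulr (htU u hu) x
    have hlt : p < (E ⊓ K u).map (lm u) ⊔ p :=
      lt_of_le_not_ge le_sup_right fun hc =>
        huv (hc (Submodule.mem_sup_left ⟨v, hvV, rfl⟩))
    refine (hU _ hlt hle).map (lm u) hle (fun x _ => mulr (htU u hu) x) ?_
    intro x _ hx
    obtain ⟨_, ⟨y, hy, rfl⟩, z, hz, hs⟩ := Submodule.mem_sup.1 hx
    have : x - y ∈ preIdeal u p := by
      show u * (x - y) ∈ p
      have hs' : u * y + z = u * x := hs
      rw [mul_sub, ← hs']
      simpa using hz
    have := add_mem (Submodule.mem_sup_right (S := E ⊓ K u) this)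
      (Submodule.mem_sup_left (T := preIdeal u p) hy)
    simpa using this
  have hinf := KL.finset_inf t N hN
  refine hinf.sub le_top ?_ le_rfl
  intro x hx
  have hx' : ∀ u ∈ t, ∃ v ∈ E ⊓ K u, u * x - u * v ∈ p := by
    intro u hu
    have hxu : x ∈ N u := (Finset.inf_le hu : t.inf N ≤ N u) hx
    obtain ⟨v, hv, z, hz, rfl⟩ := Submodule.mem_sup.1 hxu
    refine ⟨v, hv, ?_⟩
    have : u * z ∈ p := hz
    rw [mul_add]; simpa using this
  choose! v hv1 hv2 using hx'
  have hsumE : ∑ u ∈ t, v u ∈ E := sum_mem fun u hu => (hv1 u hu).1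
  have hsub : x - ∑ u ∈ t, v u ∈ p := by
    apply htp
    intro d hd
    rw [mul_sub, Finset.mul_sum, ← Finset.add_sum_erase t _ hd, ← sub_sub]
    refine sub_mem (hv2 d hd) (sum_mem fun u hu => ?_)
    have hu' := Finset.mem_erase.1 hu
    exact (memK u _).1 (hv1 u hu'.2).2 d hd hu'.1.symm
  have := add_mem (hpE hsub) hsumE
  simpa using this

/-- Lemma 6 -/
theorem KI.of_fullyFaithful [IsNoetherianRing R] (hfb : RightFullyBounded R) {β : Ordinal.{u}}
    {a b : Submodule Rᵐᵒᵖ X} {p : RightIdeal R} (hp : IsPrimeIdeal p) (hab : a < b)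
    (hbp : ∀ w ∈ b, ∀ r ∈ p, op r • w ∈ a)
    (hff : ∀ n, a < n → n ≤ b → annq a n ≤ p) (h : KI β a b) : KI β p ⊤ := by
  obtain ⟨w, hwb, hwa⟩ := SetLike.not_le_iff_exists.1 hab.not_ge
  have hpI : p ≤ a.comap (lm w) := fun r hr => hbp w hwb r hr
  have hne : ¬ ∀ J : RightIdeal R, p < J → p < a.comap (lm w) ⊓ J := by
    intro hess
    obtain ⟨A, hA2, hpA, hAI⟩ := hfb p hp _ hpI hess
    apply hpA.not_ge
    refine le_trans ?_ (hff (a ⊔ LinearMap.range (lm w)) ?_ ?_)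
    · intro r hr x hx
      obtain ⟨y, hy, _, ⟨s, rfl⟩, rfl⟩ := Submodule.mem_sup.1 hx
      rw [smul_add]
      refine add_mem (opr hy r) ?_
      rw [lm_apply, ← op_mul_smul']
      exact hAI (hA2 s r hr)
    · refine lt_of_le_not_ge le_sup_left fun hc => hwa (hc (Submodule.mem_sup_right ⟨1, ?_⟩))
      simp [lm_apply]
    · refine sup_le hab.le ?_
      rintro _ ⟨s, rfl⟩
      exact opr hwb s
  push Not at hne
  obtain ⟨J, hpJ, hJ⟩ := hne
  have hle : a.comap (lm w) ⊓ J ≤ p := by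
    by_contra hc
    exact hJ (lt_of_le_not_ge (le_inf hpI hpJ.le) hc)
  have hKJ : KI β p J := h.map (lm w) hab.le (fun x _ => opr hwb x)
    (fun x hx hx' => hle ⟨hx', hx⟩)
  exact (hKJ.annq_top hp.1 hpJ.le).sub le_top (hp.annq_eq hpJ.not_ge) le_rfl

/-- Lemma 7 -/
theorem exists_assoc [IsNoetherian Rᵐᵒᵖ R] {a b : Submodule Rᵐᵒᵖ X} (hab : a < b) :
    ∃ n, ∃ p : RightIdeal R, IsPrimeIdeal p ∧ a < n ∧ n ≤ b ∧
      (∀ w ∈ n, ∀ r ∈ p, op r • w ∈ a) ∧ ∀ n', a < n' → n' ≤ n → annq a n' ≤ p := by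
  obtain ⟨p, ⟨n, han, hnb, rfl⟩, hmax⟩ :=
    (set_has_maximal_iff_noetherian (R := Rᵐᵒᵖ) (M := R)).2 inferInstance
    {p | ∃ n, a < n ∧ n ≤ b ∧ p = annq a n} ⟨_, b, hab, le_rfl, rfl⟩
  have hff : ∀ n', a < n' → n' ≤ n → annq a n' ≤ annq a n := by
    intro n' h1 h2
    by_contra hc
    exact hmax _ ⟨n', h1, h2.trans hnb, rfl⟩
      (lt_of_le_not_ge (fun r hr w hw => hr w (h2 hw)) hc)
  refine ⟨n, annq a n, ⟨twoSided_annq _ _, ?_, ?_⟩, han, hnb, fun w hw r hr => hr w hw, hff⟩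
  · intro htop
    apply han.not_ge
    intro w hw
    have : (1:R) ∈ annq a n := htop ▸ trivial
    simpa using this w hw
  · intro x y hxy
    by_contra! hc
    obtain ⟨hx, hy⟩ := hc
    rw [mem_annq] at hx
    push Not at hx
    obtain ⟨w, hw, hwx⟩ := hx
    apply hy
    refine hff (a ⊔ LinearMap.range (lm (op x • w))) ?_ ?_ ?_
    · refine lt_of_le_not_ge le_sup_left fun hc => hwx (hc (Submodule.mem_sup_right ⟨1, ?_⟩))
      simp [lm_apply]
    · refine sup_le han.le ?_
      rintro _ ⟨s, rfl⟩
      exact opr (opr hw x) s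
    · intro v hv
      obtain ⟨z, hz, _, ⟨s, rfl⟩, rfl⟩ := Submodule.mem_sup.1 hv
      rw [smul_add]
      refine add_mem (opr hz y) ?_
      rw [lm_apply, ← op_mul_smul', ← op_mul_smul', ← mul_assoc]
      exact hxy s w hw

/-- Lemma 8 -/
theorem KI.ann [IsNoetherianRing R] [IsNoetherian Rᵐᵒᵖ R] [IsNoetherian Rᵐᵒᵖ X]
    (hfb : RightFullyBounded R) {β : Ordinal.{u}}
    {a b : Submodule Rᵐᵒᵖ X} (hab : a ≤ b) (h : KI β a b) : KI β (annq a b) ⊤ := by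
  obtain ⟨n, ⟨han, hnb, hn⟩, hmax⟩ :=
    (set_has_maximal_iff_noetherian (R := Rᵐᵒᵖ) (M := X)).2 inferInstance
    {n | a ≤ n ∧ n ≤ b ∧ KI β (annq a n) ⊤}
    ⟨a, le_rfl, hab, KI.triv (fun r _ w hw => opr hw r)⟩
  rcases hnb.lt_or_eq with hlt | rfl
  · exfalso
    obtain ⟨n', p, hp, hnn', hn'b, h1, h2⟩ := exists_assoc hlt
    have hpK : KI β p ⊤ := KI.of_fullyFaithful hfb hp hnn' h1 h2 (h.sub hab han hn'b)
    refine hmax n' ⟨han.trans hnn'.le, hn'b, hpK.mul hn ?_⟩ hnn'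
    intro x hx y hy w hw
    rw [op_mul_smul']
    exact hy _ (h1 w hw x hx)
  · exact hn

theorem KL.ann [IsNoetherianRing R] [IsNoetherian Rᵐᵒᵖ R] [IsNoetherian Rᵐᵒᵖ X]
    (hfb : RightFullyBounded R) {β : Ordinal.{u}}
    {a b : Submodule Rᵐᵒᵖ X} (hab : a ≤ b) (h : KL β a b) : KL β (annq a b) ⊤ := by
  rcases h with h | ⟨γ, hγ, h⟩
  · exact Or.inl fun r _ w hw => opr (h hw) r
  · exact Or.inr ⟨γ, hγ, h.ann hfb hab⟩

end RingPart

section Bimod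
variable {R : Type u} [Ring R]

/-- a non-prime two-sided ideal contains a product of strictly larger two-sided ideals -/
theorem exists_mul_le {P : RightIdeal R} (hP : TwoSided P) (htop : P ≠ ⊤) (hn : ¬ IsPrimeIdeal P) :
    ∃ I1 I2 : RightIdeal R, TwoSided I1 ∧ TwoSided I2 ∧ P < I1 ∧ P < I2 ∧
      ∀ x ∈ I1, ∀ y ∈ I2, x * y ∈ P := by
  have : ∃ a b : R, (∀ r, a * r * b ∈ P) ∧ a ∉ P ∧ b ∉ P := by
    by_contra! hc
    refine hn ⟨hP, htop, fun a b h => ?_⟩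
    by_cases ha : a ∈ P
    · exact Or.inl ha
    · exact Or.inr (hc a b h ha)
  obtain ⟨a, b, hab, ha, hb⟩ := this
  let I1 : RightIdeal R :=
    { carrier := {x | ∀ r, x * r * b ∈ P}
      add_mem' := by
        intro x y hx hy r
        rw [add_mul, add_mul]; exact add_mem (hx r) (hy r)
      zero_mem' := by intro r; simp
      smul_mem' := by
        intro s x hx r
        show x * unop s * r * b ∈ P
        rw [mul_assoc x]; exact hx _ }
  have hI1 : ∀ x, x ∈ I1 ↔ ∀ r, x * r * b ∈ P := fun x => Iff.rfl
  refine ⟨I1, annq P I1, ?_, twoSided_annq _ _, ?_, ?_, fun x hx y hy => hy x hx⟩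
  · intro s x hx r
    rw [mul_assoc s, mul_assoc s]; exact hP _ _ (hx r)
  · refine lt_of_le_not_ge (fun x hx r => ?_) fun hle => ha (hle hab)
    rw [mul_assoc]; exact mulr hx _
  · refine lt_of_le_not_ge (fun x hx y _ => hP _ _ hx) fun hle => hb (hle fun x hx => ?_)
    have := hx 1
    rwa [mul_one] at this

/-- the set of `x ∈ D` with `I x ⊆ C` -/
def lmid (I C D : RightIdeal R) : RightIdeal R where
  carrier := {x | x ∈ D ∧ ∀ i ∈ I, i * x ∈ C}
  add_mem' := by
    rintro x y ⟨hx, hx'⟩ ⟨hy, hy'⟩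
    refine ⟨add_mem hx hy, fun i hi => ?_⟩
    rw [mul_add]; exact add_mem (hx' i hi) (hy' i hi)
  zero_mem' := ⟨zero_mem _, by intro i _; simp⟩
  smul_mem' := by
    rintro s x ⟨hx, hx'⟩
    refine ⟨D.smul_mem s hx, fun i hi => ?_⟩
    show i * (x * unop s) ∈ C
    rw [← mul_assoc]; exact mulr (hx' i hi) _

/-- the set of `x ∈ D` with `x R I ⊆ C` -/
def rmid (I C D : RightIdeal R) (hI : TwoSided I) : RightIdeal R where
  carrier := {x | x ∈ D ∧ ∀ i ∈ I, x * i ∈ C}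
  add_mem' := by
    rintro x y ⟨hx, hx'⟩ ⟨hy, hy'⟩
    refine ⟨add_mem hx hy, fun i hi => ?_⟩
    rw [add_mul]; exact add_mem (hx' i hi) (hy' i hi)
  zero_mem' := ⟨zero_mem _, by intro i _; simp⟩
  smul_mem' := by
    rintro s x ⟨hx, hx'⟩
    refine ⟨D.smul_mem s hx, fun i hi => ?_⟩
    show x * unop s * i ∈ C
    rw [mul_assoc]; exact hx' _ (hI _ _ hi)

/-- the left residual `{x | x D ⊆ C}` of a left ideal `D` -/
def lres (C D : RightIdeal R) (hD : TwoSided D) : RightIdeal R where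
  carrier := {x | ∀ d ∈ D, x * d ∈ C}
  add_mem' := by
    intro x y hx hy d hd
    rw [add_mul]; exact add_mem (hx d hd) (hy d hd)
  zero_mem' := by intro d _; simp
  smul_mem' := by
    intro s x hx d hd
    show x * unop s * d ∈ C
    rw [mul_assoc]; exact hx _ (hD _ _ hd)

/-- the largest two-sided ideal in a right ideal -/
def core (E : RightIdeal R) : RightIdeal R where
  carrier := {x | ∀ r, r * x ∈ E}
  add_mem' := by
    intro x y hx hy r
    rw [mul_add]; exact add_mem (hx r) (hy r)
  zero_mem' := by intro r; simp
  smul_mem' := by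
    intro s x hx r
    show r * (x * unop s) ∈ E
    rw [← mul_assoc]; exact mulr (hx r) _

theorem core_le (E : RightIdeal R) : core E ≤ E := by
  intro x hx
  simpa using hx 1

theorem twoSided_core (E : RightIdeal R) : TwoSided (core E) := by
  intro s x hx r
  rw [← mul_assoc]; exact hx _

theorem twoSided_inf {ι : Type*} (t : Finset ι) (f : ι → RightIdeal R)
    (h : ∀ i ∈ t, TwoSided (f i)) : TwoSided (t.inf f) := by
  intro r x hx
  rw [Submodule.mem_finsetInf] at *
  exact fun i hi => h i hi r x (hx i hi)

theorem prime_inf {ι : Type*} {Q : RightIdeal R} (hQ : IsPrimeIdeal Q) (t : Finset ι)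
    (f : ι → RightIdeal R)
    (h : ∀ i ∈ t, TwoSided (f i) ∧ Q < f i) : Q < t.inf f := by
  classical
  induction t using Finset.induction_on with
  | empty => simpa using lt_top_iff_ne_top.2 hQ.2.1
  | insert i t _ ih =>
    rw [Finset.inf_insert]
    exact hQ.essential (h i (by simp)).1 (h i (by simp)).2 _ (ih fun j hj => h j (by simp [hj]))

/-- The prime case of the bimodule theorem. -/
theorem bimod_prime [IsNoetherianRing R] [IsNoetherian Rᵐᵒᵖ R] (hfb : RightFullyBounded R)
    {β : Ordinal.{u}} {p Q C D : RightIdeal R} (hp : IsPrimeIdeal p) (hQ : IsPrimeIdeal Q)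
    (hC : TwoSided C) (hD : TwoSided D) (hCD : C ≤ D) (hpD : ∀ x ∈ p, ∀ d ∈ D, x * d ∈ C)
    (hann : annq C D = Q) (hpK : KI β p ⊤)
    (ih : ∀ γ, γ < β → ∀ p' : RightIdeal R, TwoSided p' → KI γ p' ⊤ →
      ∀ C' D' : RightIdeal R, TwoSided C' → TwoSided D' → C' ≤ D' →
      (∀ x ∈ p', ∀ d ∈ D', x * d ∈ C') → KI γ C' D') : KI β C D := by
  classical
  -- left ideals
  let S : Set (Submodule R R) := {Y | (∀ c ∈ C, c ∈ Y) ∧ ∃ G : RightIdeal R, TwoSided G ∧ C ≤ G ∧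
    G ≤ D ∧ annq C G ≤ Q ∧ ∀ y ∈ Y, y ∈ G → y ∈ C}
  let CL : Submodule R R :=
    { carrier := C
      add_mem' := fun hx hy => add_mem hx hy
      zero_mem' := zero_mem C
      smul_mem' := fun r x hx => hC r x hx }
  have hmemCL : ∀ x, x ∈ CL ↔ x ∈ C := fun x => Iff.rfl
  obtain ⟨Y, ⟨hCY, G, hG, hCG, hGD, hGQ, hYG⟩, hmax⟩ :=
    (set_has_maximal_iff_noetherian (R := R) (M := R)).2 inferInstance
    S ⟨CL, fun c hc => hc, D, hD, hCD, le_rfl, hann.le, fun y hy _ => hy⟩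
  have hess : ∀ G' : RightIdeal R, TwoSided G' → C ≤ G' → G' ≤ G → annq C G' ≤ Q →
      ∀ Z : Submodule R R, (∀ z ∈ Z, z ∈ G) → (∀ z ∈ Z, z ∈ G' → z ∈ C) → ∀ z ∈ Z, z ∈ C := by
    intro G' hG' hCG' hG'G hG'Q Z hZG hZG' z hz
    have hle : Y ⊔ Z ≤ Y := by
      by_contra hc
      refine hmax (Y ⊔ Z) ⟨fun c hc => Submodule.mem_sup_left (hCY c hc), G', hG', hCG',
        hG'G.trans hGD, hG'Q, ?_⟩ (lt_of_le_not_ge le_sup_left hc)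
      intro w hw hwG'
      obtain ⟨y, hy, z, hz, rfl⟩ := Submodule.mem_sup.1 hw
      have hyG : y ∈ G := by
        have := sub_mem (hG'G hwG') (hZG z hz)
        simpa using this
      have hyC := hYG y hy hyG
      have hzG' : z ∈ G' := by
        have := sub_mem hwG' (hCG' hyC)
        simpa using this
      exact add_mem hyC (hZG' z hz hzG')
    exact hYG z (hle (Submodule.mem_sup_right hz)) (hZG z hz)
  have hpG : ∀ x ∈ p, ∀ g ∈ G, x * g ∈ C := fun x hx g hg => hpD x hx g (hGD hg)
  obtain ⟨t, ht⟩ := (IsNoetherian.noetherian G : G.FG)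
  have htG : ∀ g ∈ t, g ∈ G := fun g hg => ht ▸ Submodule.subset_span hg
  have hquot : ∀ G' : RightIdeal R, TwoSided G' → C ≤ G' → G' ≤ G → annq C G' ≤ Q →
      KL β G' G := by
    intro G' hG' hCG' hG'G hG'Q
    have step : ∀ h, h ∉ p → ∀ g ∈ G, ∃ r, r * h ∉ p ∧ r * h * g ∈ G' := by
      intro h hh g hg
      by_cases hall : ∀ r, r * (h * g) ∈ C
      · exact ⟨1, by simpa using hh, hCG' (by simpa using hall 1)⟩
      · push Not at hall
        obtain ⟨r, hr⟩ := hall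
        by_contra! hcon
        refine hr (hess G' hG' hCG' hG'G hG'Q (Submodule.span R {h * g}) ?_ ?_ _
          (Submodule.mem_span_singleton.2 ⟨r, rfl⟩))
        · intro z hz
          obtain ⟨s, rfl⟩ := Submodule.mem_span_singleton.1 hz
          exact hG _ _ (hG _ _ hg)
        · intro z hz hzG'
          obtain ⟨s, rfl⟩ := Submodule.mem_span_singleton.1 hz
          rw [smul_eq_mul, ← mul_assoc] at *
          by_cases hs : s * h ∈ p
          · exact hpG _ hs _ hg
          · exact absurd hzG' (hcon s hs)
    have step2 : ∀ s : Finset R, (∀ g ∈ s, g ∈ G) → ∃ h, h ∉ p ∧ ∀ g ∈ s, h * g ∈ G' := by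
      intro s
      induction s using Finset.induction_on with
      | empty =>
        intro _
        refine ⟨1, fun h1 => hp.2.1 ?_, by simp⟩
        rw [eq_top_iff]
        intro x _
        simpa using mulr h1 x
      | insert g s _ ih' =>
        intro hs
        obtain ⟨h, hh, hg'⟩ := ih' (fun g' hg' => hs g' (Finset.mem_insert_of_mem hg'))
        obtain ⟨r, hr, hrg⟩ := step h hh g (hs g (Finset.mem_insert_self _ _))
        refine ⟨r * h, hr, fun g' hg'' => ?_⟩
        rcases Finset.mem_insert.1 hg'' with rfl | hin
        · exact hrg
        · rw [mul_assoc]; exact hG' _ _ (hg' g' hin)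
    obtain ⟨h, hh, hht⟩ := step2 t htG
    have hp' : h ∈ lres G' G hG := by
      have : G ≤ G'.comap (lm h) := by
        rw [← ht, Submodule.span_le]
        exact fun g hg => hht g hg
      exact fun d hd => this hd
    have hlt : p < lres G' G hG := lt_of_le_not_ge
      (fun x hx d hd => hCG' (hpG x hx d hd)) (fun hle => hh (hle hp'))
    have h2 : TwoSided (lres G' G hG) := by
      intro r x hx d hd
      rw [mul_assoc]; exact hG' _ _ (hx d hd)
    rcases KL.of_essential hp hpK hlt.le (hp.essential h2 hlt) with h3 | ⟨γ, hγ, h3⟩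
    · left
      intro g hg
      simpa using h3 (show (1:R) ∈ ⊤ from trivial) g hg
    · exact Or.inr ⟨γ, hγ, ih γ hγ _ h2 h3 G' G hG' hG hG'G fun x hx d hd => hx d hd⟩
  have hGK : KI β C G := by
    apply KI_of_essential
    intro E hCE hEG hE
    have hA : ∀ g ∈ t, ∃ A : RightIdeal R, TwoSided A ∧ Q < A ∧ A ≤ E.comap (lm g) := by
      intro g hg
      have hgQ : ∀ x ∈ Q, g * x ∈ C := by
        intro x hx
        rw [← hann] at hx
        exact hx g (hGD (htG g hg))
      have hQI : Q ≤ E.comap (lm g) := fun x hx => hCE (hgQ x hx)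
      refine hfb Q hQ _ hQI ?_
      intro J hJ
      refine lt_of_le_not_ge (le_inf hQI hJ.le) fun hle => ?_
      have hz : C ⊔ J.map (lm g) ≤ C := by
        refine hE _ le_sup_left (sup_le hCG ?_) ?_
        · rintro _ ⟨j, _, rfl⟩
          exact mulr (htG g hg) j
        · rintro x ⟨hx, hxE⟩
          obtain ⟨c, hc, _, ⟨j, hj, rfl⟩, rfl⟩ := Submodule.mem_sup.1 hx
          have hgj : lm g j ∈ E := by
            have := sub_mem hxE (hCE hc)
            simpa using this
          exact add_mem hc (hgQ j (hle ⟨hgj, hj⟩))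
      apply hJ.not_ge
      intro j hj
      exact hle ⟨hCE (hz (Submodule.mem_sup_right ⟨j, hj, rfl⟩)), hj⟩
    choose! F hF1 hF2 hF3 using hA
    have hA2 : TwoSided (t.inf F) := twoSided_inf t F hF1
    have hQA : Q < t.inf F := prime_inf hQ t F fun i hi => ⟨hF1 i hi, hF2 i hi⟩
    have hGA : ∀ g ∈ G, ∀ x ∈ t.inf F, g * x ∈ E := by
      intro g hg
      rw [← ht] at hg
      induction hg using Submodule.span_induction with
      | mem g hg =>
        intro x hx
        exact hF3 g hg ((Finset.inf_le hg : t.inf F ≤ F g) hx)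
      | zero => intro x _; simp
      | add y z _ _ h1 h2 =>
        intro x hx
        rw [add_mul]; exact add_mem (h1 x hx) (h2 x hx)
      | smul r y _ h1 =>
        intro x hx
        show y * unop r * x ∈ E
        rw [mul_assoc]; exact h1 _ (hA2 _ _ hx)
    have hcore : ∀ g ∈ G, ∀ x ∈ t.inf F, g * x ∈ core E := by
      intro g hg x hx r
      rw [← mul_assoc]; exact hGA _ (hG _ _ hg) _ hx
    have hcC : C ≤ core E := fun c hc r => hCE (hC r c hc)
    have hcG : core E ≤ G := (core_le E).trans hEG
    have := hquot (core E) (twoSided_core E) hcC hcG ?_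
    · exact this.sub hcG (core_le E) le_rfl
    · intro x hx
      refine hQ.annq_eq hQA.not_ge (fun a ha => hGQ fun g hg => ?_)
      show g * (a * x) ∈ C
      rw [← mul_assoc]
      exact hx _ (hcore g hg a ha)
  have hQK : KI β Q ⊤ := (hGK.annq_top hC hCG).sub le_top hGQ le_rfl
  refine hQK.of_ann hCD fun w hw r hr => ?_
  rw [← hann] at hr
  exact hr w hw

theorem bimod [IsNoetherianRing R] [IsNoetherian Rᵐᵒᵖ R] (hfb : RightFullyBounded R)
    (β : Ordinal.{u}) : ∀ p : RightIdeal R, TwoSided p → KI β p ⊤ →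
      ∀ C D : RightIdeal R, TwoSided C → TwoSided D → C ≤ D →
      (∀ x ∈ p, ∀ d ∈ D, x * d ∈ C) → KI β C D := by
  induction β using WellFoundedLT.induction with
  | ind β ihβ =>
  intro p
  induction p using WellFoundedGT.induction with
  | ind p ihp =>
  intro hp2 hpK
  by_cases hptop : p = ⊤
  · intro C D _ _ _ h
    refine KI.triv fun d hd => ?_
    simpa using h 1 (hptop ▸ trivial) d hd
  by_cases hp : IsPrimeIdeal p
  · have key : ∀ Q : RightIdeal R, ∀ C D : RightIdeal R, TwoSided C → TwoSided D → C ≤ D →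
        (∀ x ∈ p, ∀ d ∈ D, x * d ∈ C) → annq C D = Q → KI β C D := by
      intro Q
      induction Q using WellFoundedGT.induction with
      | ind Q ihQ =>
      intro C D hC hD hCD hpD hann
      have hQ2 : TwoSided Q := hann ▸ twoSided_annq _ _
      by_cases hQtop : Q = ⊤
      · refine KI.triv fun d hd => ?_
        have h1 : (1:R) ∈ annq C D := by rw [hann, hQtop]; trivial
        simpa using h1 d hd
      by_cases hQ : IsPrimeIdeal Q
      · exact bimod_prime hfb hp hQ hC hD hCD hpD hann hpK ihβ
      · obtain ⟨I1, I2, h1, h2, hl1, hl2, hmul⟩ := exists_mul_le hQ2 hQtop hQ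
        have hM2 : TwoSided (rmid I2 C D h2) := by
          rintro r x ⟨hx, hx'⟩
          refine ⟨hD _ _ hx, fun i hi => ?_⟩
          rw [mul_assoc]; exact hC _ _ (hx' i hi)
        have hCM : C ≤ rmid I2 C D h2 := fun c hc => ⟨hCD hc, fun i _ => mulr hc i⟩
        have hMD : rmid I2 C D h2 ≤ D := fun x hx => hx.1
        refine KI.ext (b := rmid I2 C D h2) ?_ ?_ hCM hMD
        · refine ihQ _ (lt_of_lt_of_le hl2 ?_) C _ hC hM2 hCM
            (fun x hx d hd => hpD x hx d (hMD hd)) rfl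
          exact fun i hi m hm => hm.2 i hi
        · refine ihQ _ (lt_of_lt_of_le hl1 ?_) _ D hM2 hD hMD
            (fun x hx d hd => hCM (hpD x hx d hd)) rfl
          intro i hi d hd
          refine ⟨mulr hd i, fun j hj => ?_⟩
          show d * i * j ∈ C
          rw [mul_assoc]
          have : i * j ∈ annq C D := hann ▸ hmul i hi j hj
          exact this d hd
    exact fun C D hC hD hCD h => key _ C D hC hD hCD h rfl
  · intro C D hC hD hCD hpD
    obtain ⟨I1, I2, h1, h2, hl1, hl2, hmul⟩ := exists_mul_le hp2 hptop hp
    have hM2 : TwoSided (lmid I1 C D) := by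
      rintro r x ⟨hx, hx'⟩
      refine ⟨hD _ _ hx, fun i hi => ?_⟩
      rw [← mul_assoc]; exact hx' _ (mulr hi r)
    have hCM : C ≤ lmid I1 C D := fun c hc => ⟨hCD hc, fun i _ => hC i c hc⟩
    have hMD : lmid I1 C D ≤ D := fun x hx => hx.1
    refine KI.ext (b := lmid I1 C D) ?_ ?_ hCM hMD
    · exact ihp I1 hl1 h1 (hpK.sub le_top hl1.le le_rfl) C _ hC hM2 hCM
        (fun x hx d hd => hd.2 x hx)
    · refine ihp I2 hl2 h2 (hpK.sub le_top hl2.le le_rfl) _ D hM2 hD hMD ?_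
      intro x hx d hd
      refine ⟨hD _ _ hd, fun i hi => ?_⟩
      rw [← mul_assoc]; exact hpD _ (hmul i hi x hx) d hd

end Bimod

section Final
variable {R : Type u} [Ring R] {X : Type u} [AddCommGroup X] [Module Rᵐᵒᵖ X]

theorem devLE_sub_iff (W : Submodule Rᵐᵒᵖ X) (β : Ordinal.{u}) :
    DevLE β (Submodule Rᵐᵒᵖ W) ↔ KI β ⊥ W := by
  constructor
  · intro h
    refine devLE_strictMono β (fun x : Set.Icc ⊥ W => x.1.comap W.subtype) ?_ h
    apply Monotone.strictMono_of_injective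
    · exact fun x y hxy => Submodule.comap_mono hxy
    · intro x y hxy
      have h1 : ∀ z : Set.Icc ⊥ W, (z.1.comap W.subtype).map W.subtype = z.1 := by
        intro z
        rw [Submodule.map_comap_subtype]; exact inf_eq_right.2 z.2.2
      apply Subtype.ext
      rw [← h1 x, ← h1 y]
      exact congrArg _ hxy
  · intro h
    refine devLE_strictMono β (fun x : Submodule Rᵐᵒᵖ W =>
      (⟨x.map W.subtype, bot_le, Submodule.map_subtype_le _ _⟩ : Set.Icc ⊥ W)) ?_ h
    apply Monotone.strictMono_of_injective
    · exact fun x y hxy => Submodule.map_mono hxy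
    · intro x y hxy
      exact Submodule.map_injective_of_injective W.injective_subtype (congrArg Subtype.val hxy)

theorem devLE_quot_iff (q : Submodule Rᵐᵒᵖ X) (β : Ordinal.{u}) :
    DevLE β (Submodule Rᵐᵒᵖ (X ⧸ q)) ↔ KI β q ⊤ := by
  constructor
  · intro h
    refine devLE_strictMono β (fun x : Set.Icc q ⊤ => x.1.map q.mkQ) ?_ h
    apply Monotone.strictMono_of_injective
    · exact fun x y hxy => Submodule.map_mono hxy
    · intro x y hxy
      have h1 : ∀ z : Set.Icc q ⊤, (z.1.map q.mkQ).comap q.mkQ = z.1 := by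
        intro z
        rw [Submodule.comap_map_mkQ]; exact sup_eq_right.2 z.2.1
      apply Subtype.ext
      rw [← h1 x, ← h1 y]
      exact congrArg _ hxy
  · intro h
    refine devLE_strictMono β (fun x : Submodule Rᵐᵒᵖ (X ⧸ q) =>
      (⟨x.comap q.mkQ, Submodule.le_comap_mkQ _ _, le_top⟩ : Set.Icc q ⊤)) ?_ h
    apply Monotone.strictMono_of_injective
    · exact fun x y hxy => Submodule.comap_mono hxy
    · intro x y hxy
      exact Submodule.comap_injective_of_surjective q.mkQ_surjective (congrArg Subtype.val hxy)

theorem rKdim_spec [IsNoetherian Rᵐᵒᵖ X] : DevLE (rKdim R X) (Submodule Rᵐᵒᵖ X) :=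
  csInf_mem (s := {α : Ordinal.{u} | DevLE α (Submodule Rᵐᵒᵖ X)})
    (exists_devLE (Submodule Rᵐᵒᵖ X))

/-- critical modules -/
theorem crit_KL [IsNoetherian Rᵐᵒᵖ X] {W : Submodule Rᵐᵒᵖ X} (hW : IsCriticalMod R W)
    {n : Submodule Rᵐᵒᵖ X} (hn : n ≠ ⊥) (hnW : n ≤ W) : KL (rKdim R W) n W := by
  have hn' : n.comap W.subtype ≠ ⊥ := by
    intro h
    apply hn
    have := Submodule.map_comap_subtype W n
    rw [h, Submodule.map_bot, inf_eq_right.2 hnW] at this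
    exact this.symm
  right
  refine ⟨_, hW.2 _ hn', ?_⟩
  have h1 := (devLE_quot_iff (n.comap W.subtype) _).1 (rKdim_spec (R := R) (X := W ⧸ n.comap W.subtype))
  refine h1.surj W.subtype le_top (fun x hx => hx) ?_
  intro y hy
  exact ⟨⟨y, hy⟩, trivial, 0, zero_mem _, by simp⟩

theorem crit_le [IsNoetherian Rᵐᵒᵖ X] {W : Submodule Rᵐᵒᵖ X} (hW : IsCriticalMod R W)
    {n : Submodule Rᵐᵒᵖ X} (hn : n ≠ ⊥) (hnW : n ≤ W) : ¬ KL (rKdim R W) ⊥ n := by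
  intro h
  rcases h.ext (crit_KL hW hn hnW) bot_le hnW with h1 | ⟨γ, hγ, h1⟩
  · exact hn (le_bot_iff.1 (hnW.trans h1))
  · exact hγ.not_ge (csInf_le' ((devLE_sub_iff W γ).2 h1))

end Final

/-- Every cyclic critical submodule `W` of a cyclic uniform module `M = R/A`
with assassinator `q` has annihilator exactly `q`, is fully faithful over
`R/q`, and `Kdim W = Kdim R/q`. -/
theorem stmt_13 {R : Type u} [Ring R] (hpr : IsPrimeRing R)
    [IsNoetherianRing R] [IsNoetherian Rᵐᵒᵖ R] (hfb : RightFullyBounded R)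
    (A : RightIdeal R) (q : RightIdeal R) (m : Ordinal.{u})
    (huni : IsUniformMod R (R ⧸ A))
    (hass : IsAssocPrime R q (R ⧸ A) ∧
      ∀ q' : RightIdeal R, IsAssocPrime R q' (R ⧸ A) → q' = q)
    (hkdim : rKdim R (R ⧸ A) = m)
    (W : Submodule Rᵐᵒᵖ (R ⧸ A))
    (hcyc : ∃ w : R ⧸ A, W = Submodule.span Rᵐᵒᵖ {w})
    (hcrit : IsCriticalMod R ↥W) :
    annSet R ↥W = (q : Set R) ∧ FullyFaithfulOver R q ↥W ∧
      rKdim R ↥W = rKdim R (R ⧸ q) := by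
  obtain ⟨⟨hq, N, hN0, hN⟩, -⟩ := hass
  have hW0 : W ≠ ⊥ := by
    rintro rfl
    exact not_nontrivial_iff_subsingleton.2 inferInstance hcrit.1
  have hWq : ∀ w ∈ W, ∀ r ∈ q, op r • w = 0 := by
    by_contra! hcon
    obtain ⟨w, hw, r, hr, hwr⟩ := hcon
    have hI := (crit_KL hcrit (huni W N hW0 hN0) inf_le_left).ann hfb inf_le_left
    have hNq : ∀ x ∈ N, ∀ s ∈ q, op s • x = 0 := by
      have := hN N le_rfl hN0
      intro x hx s hs
      have hs' : s ∈ annSubSet R N := by rw [this]; exact hs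
      exact hs' x hx
    have hCq : TwoSided (q ⊓ annq ⊥ W) := fun s x hx =>
      ⟨hq.1 s x hx.1, twoSided_annq _ _ s x hx.2⟩
    have hmul : ∀ x ∈ annq (W ⊓ N) W, ∀ d ∈ q, x * d ∈ q ⊓ annq ⊥ W := by
      intro x hx d hd
      refine ⟨hq.1 _ _ hd, fun v hv => ?_⟩
      rw [op_mul_smul', Submodule.mem_bot]
      exact hNq _ (hx v hv).2 d hd
    have hKL : KL (rKdim R W) (q ⊓ annq ⊥ W) q := by
      rcases hI with hI | ⟨γ, hγ, hI⟩
      · left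
        intro d hd
        simpa using hmul 1 (hI trivial) d hd
      · exact Or.inr ⟨γ, hγ, bimod hfb γ _ (twoSided_annq _ _) hI _ _ hCq hq.1 inf_le_left hmul⟩
    refine crit_le hcrit (n := q.map (lm w)) ?_ ?_ (hKL.surj (lm w) inf_le_left ?_ ?_)
    · intro h
      have : lm w r ∈ q.map (lm w) := ⟨r, hr, rfl⟩
      rw [h] at this
      exact hwr this
    · rintro _ ⟨s, _, rfl⟩
      exact opr hw s
    · exact fun x hx => hx.2 w hw
    · rintro _ ⟨s, hs, rfl⟩
      exact ⟨s, hs, 0, zero_mem _, by simp⟩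
  have hff : ∀ n : Submodule Rᵐᵒᵖ (R ⧸ A), n ≠ ⊥ → n ≤ W → ∀ r, (∀ x ∈ n, op r • x = 0) →
      r ∈ q := by
    intro n hn _ r hr
    have h1 := hN (n ⊓ N) inf_le_right (huni n N hn hN0)
    have : r ∈ annSubSet R (n ⊓ N) := fun x hx => hr x hx.1
    rw [h1] at this
    exact this
  refine ⟨?_, ⟨?_, ?_⟩, ?_⟩
  · ext r
    constructor
    · intro h
      refine hff W hW0 le_rfl r fun x hx => ?_
      exact congrArg Subtype.val (h ⟨x, hx⟩)
    · exact fun h x => Subtype.ext (hWq x.1 x.2 r h)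
  · exact fun r h x => Subtype.ext (hWq x.1 x.2 r h)
  · intro n hn
    ext r
    constructor
    · intro h
      refine hff (n.map W.subtype) ?_ (Submodule.map_subtype_le _ _) r ?_
      · intro h0
        exact hn (Submodule.map_injective_of_injective W.injective_subtype
          (h0.trans (Submodule.map_bot _).symm))
      · rintro _ ⟨x, hx, rfl⟩
        exact congrArg Subtype.val (h x hx)
    · exact fun h x _ => Subtype.ext (hWq x.1 x.2 r h)
  · unfold rKdim
    congr 1
    ext β
    simp only [Set.mem_ofPred_eq]
    rw [devLE_sub_iff, devLE_quot_iff]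
    constructor
    · intro h
      refine h.of_fullyFaithful hfb hq (bot_lt_iff_ne_bot.2 hW0)
        (fun w hw r hr => (Submodule.mem_bot _).2 (hWq w hw r hr)) ?_
      intro n hn hnW r hr
      exact hff n hn.ne_bot hnW r fun x hx => (Submodule.mem_bot _).1 (hr x hx)
    · exact fun h => h.of_ann bot_le
        (fun w hw r hr => (Submodule.mem_bot _).2 (hWq w hw r hr))
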